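/- Let (𝖩_n) be a sequence of integral convex polygons in ℝ² whose perimeters tend to infinity and such that p(𝖩_n)^{-1} 𝖩_n converges in the Hausdorff metric to a convex domain 𝖩_∞ (with nonempty interior). Then the number of faces satisfies card(ℱ(𝖩_n)) = o(p(𝖩_n)). -/

import Mathlib

open Set MeasureTheory Metric Filter Topology Pointwise

/-- The lattice points of the plane. -/
def IsLatticePt (x : EuclideanSpace ℝ (Fin 2)) : Prop := ∀ i, ∃ n : ℤ, x i = (n : ℝ)

/-- Perimeter: the 1-dimensional Hausdorff measure of the boundary. -/
noncomputable def per (J : Set (EuclideanSpace ℝ (Fin 2))) : ℝ :=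
  (μH[1] (frontier J)).toReal

/-!
Each point of a finite set in convex position maximises a linear functional strictly. Two
consequences bound the number of vertices of a lattice polygon. Comparing the functionals at `q`
and at `q + d` shows that at most two translates of a segment have both endpoints among the
vertices, so the number of vertices with a neighbour at distance less than `r` is bounded in terms
of `r` only. The remaining vertices are `r`-separated; grouping them by the signs of the
coefficients of their functionals yields four sets on each of which one coordinate is monotone in
the other, so there are `O(diam / r)` of them. The diameter of a polygon is at most its perimeter,
since projecting the boundary onto the line through two points covers the segment between them.
-/

section LinearForms

variable {K V : Type*} [Field K] [AddCommGroup V] [Module K V]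

theorem exists_dual_ker_eq_span_singleton (hV : Module.finrank K V = 2) {d : V} (hd : d ≠ 0) :
    ∃ ω : Module.Dual K V, LinearMap.ker ω = Submodule.span K {d} := by
  have := Module.finite_of_finrank_eq_succ hV
  have hspan : Module.finrank K (Submodule.span K {d}) = 1 := finrank_span_singleton hd
  obtain ⟨ω, hω, hle⟩ := Submodule.exists_le_ker_of_lt_top (Submodule.span K {d})
    (Submodule.lt_top_of_finrank_lt_finrank (by omega))
  refine ⟨ω, (Submodule.eq_of_le_of_finrank_eq hle ?_).symm⟩
  have := Module.Dual.finrank_ker_add_one_of_ne_zero hω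
  omega

theorem ker_ne_bot_of_one_lt_rank (hV : 1 < Module.rank K V) (f : V →ₗ[K] K) :
    LinearMap.ker f ≠ ⊥ := by
  intro hf
  have hle := LinearMap.lift_rank_le_of_injective f (LinearMap.ker_eq_bot.1 hf)
  rw [Module.rank_self, Cardinal.lift_one, Cardinal.lift_le_one_iff] at hle
  exact hle.not_gt hV

end LinearForms

section TopologicalVectorSpace

variable {E : Type*} [AddCommGroup E] [Module ℝ E] [TopologicalSpace E] [IsTopologicalAddGroup E]
  [ContinuousSMul ℝ E] [LocallyConvexSpace ℝ E] [T2Space E] {A : Finset E} {d p q r : E}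

theorem exists_strongDual_forall_lt_of_convexIndependent
    (hA : ConvexIndependent ℝ ((↑) : A → E)) (hp : p ∈ A) :
    ∃ f : StrongDual ℝ E, ∀ q ∈ A, q ≠ p → f q < f p := by
  have hp' : p ∉ convexHull ℝ ((A : Set E) \ {p}) :=
    convexIndependent_set_iff_notMem_convexHull_sdiff.1 hA p hp
  have hclosed : IsClosed (convexHull ℝ ((A : Set E) \ {p})) :=
    A.finite_toSet.sdiff.isClosed_convexHull ℝ
  obtain ⟨f, u, hlt, hu⟩ := geometric_hahn_banach_closed_point (convex_convexHull ℝ _) hclosed hp'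
  exact ⟨f, fun q hq hqp => (hlt q (subset_convexHull ℝ _ ⟨hq, hqp⟩)).trans hu⟩

theorem smul_sub_add_smul_sub_notMem_span_singleton
    (hA : ConvexIndependent ℝ ((↑) : A → E))
    (hp : p ∈ A) (hpd : p + d ∈ A) (hq : q ∈ A) (hqd : q + d ∈ A) (hr : r ∈ A) (hrd : r + d ∈ A)
    (hpq : p ≠ q) (hrq : r ≠ q) {a b : ℝ} (ha : 0 ≤ a) (hb : 0 ≤ b) (hab : 0 < a + b) :
    a • (p - q) + b • (r - q) ∉ Submodule.span ℝ {d} := by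
  intro hmem
  obtain ⟨s, hs⟩ := Submodule.mem_span_singleton.1 hmem
  have neg_of_neg {f : StrongDual ℝ E} (hfp : f (p - q) < 0) (hfr : f (r - q) < 0) :
      s * f d < 0 := by
    have hfs : s * f d = a * f (p - q) + b * f (r - q) := by
      simpa only [map_add, map_smul, smul_eq_mul] using congrArg f hs
    rw [hfs]
    rcases ha.eq_or_lt with rfl | ha
    · rw [zero_add] at hab
      nlinarith
    · nlinarith
  obtain ⟨f, hf⟩ := exists_strongDual_forall_lt_of_convexIndependent hA hq
  obtain ⟨g, hg⟩ := exists_strongDual_forall_lt_of_convexIndependent hA hqd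
  have hfs : s * f d < 0 := neg_of_neg
    (by simpa only [map_sub, sub_neg] using hf p hp hpq)
    (by simpa only [map_sub, sub_neg] using hf r hr hrq)
  have hgs : s * g d < 0 := neg_of_neg
    (by simpa using hg _ hpd (by simpa using hpq)) (by simpa using hg _ hrd (by simpa using hrq))
  have hd : d ≠ 0 := by
    rintro rfl
    simp at hfs
  have hfd : f d < 0 := by simpa using hf _ hqd (by simpa using hd)
  have hgd : 0 < g d := by simpa using hg _ hq (by simpa using hd)
  nlinarith

theorem card_filter_add_mem_le_two [DecidableEq E] (hE : Module.finrank ℝ E = 2)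
    (hA : ConvexIndependent ℝ ((↑) : A → E)) (hd : d ≠ 0) :
    (A.filter fun p => p + d ∈ A).card ≤ 2 := by
  set B := A.filter fun p => p + d ∈ A
  obtain ⟨ω, hω⟩ := exists_dual_ker_eq_span_singleton hE hd
  by_contra! hcard
  have hB : B.Nonempty := Finset.card_pos.1 (by omega)
  obtain ⟨p, hp, hmin⟩ := B.exists_min_image ω hB
  obtain ⟨r, hr, hmax⟩ := B.exists_max_image ω hB
  obtain ⟨q, hq, hqpr⟩ := Finset.exists_mem_notMem_of_card_lt_card
    (Finset.card_le_two.trans_lt hcard : ({p, r} : Finset E).card < B.card)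
  obtain ⟨hqp, hqr⟩ : q ≠ p ∧ q ≠ r := by simpa using hqpr
  have hnot {a b : ℝ} (ha : 0 ≤ a) (hb : 0 ≤ b) (hab : 0 < a + b) :
      a * (ω p - ω q) + b * (ω r - ω q) ≠ 0 := by
    have hmem {x : E} (hx : x ∈ B) : x ∈ A ∧ x + d ∈ A := Finset.mem_filter.1 hx
    have h := smul_sub_add_smul_sub_notMem_span_singleton hA (hmem hp).1 (hmem hp).2 (hmem hq).1
      (hmem hq).2 (hmem hr).1 (hmem hr).2 hqp.symm hqr.symm ha hb hab
    simpa only [← hω, LinearMap.mem_ker, map_add, map_smul, map_sub, smul_eq_mul] using h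
  rcases (hmin q hq).eq_or_lt with hpq | hpq
  · exact hnot zero_le_one le_rfl (by norm_num) (by rw [hpq]; ring)
  · exact hnot (sub_nonneg.2 (hmax q hq)) (sub_nonneg.2 hpq.le)
      (by linarith [hmax q hq]) (by ring)

theorem card_filter_exists_add_mem_le [DecidableEq E] (hE : Module.finrank ℝ E = 2)
    (hA : ConvexIndependent ℝ ((↑) : A → E)) {D : Finset E} (hD : 0 ∉ D) :
    (A.filter fun p => ∃ d ∈ D, p + d ∈ A).card ≤ D.card * 2 := by
  have hcover : (A.filter fun p => ∃ d ∈ D, p + d ∈ A) =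
      D.biUnion fun d => A.filter fun p => p + d ∈ A := by
    ext p
    simp only [Finset.mem_filter, Finset.mem_biUnion]
    tauto
  rw [hcover]
  exact Finset.card_biUnion_le_card_mul _ _ _ fun d hd =>
    card_filter_add_mem_le_two hE hA (ne_of_mem_of_not_mem hd hD)

end TopologicalVectorSpace

theorem abs_sub_of_mul_nonpos {R : Type*} [Ring R] [LinearOrder R] [IsStrictOrderedRing R]
    {a b : R} (hab : a * b ≤ 0) : |a - b| = |a| + |b| := by
  have hsame : 0 ≤ a * -b := by rwa [mul_neg, neg_nonneg]
  rw [sub_eq_add_neg, (abs_add_eq_add_abs_iff _ _).2 (mul_nonneg_iff.1 hsame), abs_neg]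

theorem card_le_div_add_one_of_pairwise_le_abs_sub {α : Type*} {S : Finset α} {f : α → ℝ}
    {r w : ℝ} (hr : 0 < r) (hw : 0 ≤ w)
    (hsep : (S : Set α).Pairwise fun x y => r ≤ |f x - f y|)
    (hwidth : ∀ x ∈ S, ∀ y ∈ S, f x - f y ≤ w) : (S.card : ℝ) ≤ w / r + 1 := by
  rcases S.eq_empty_or_nonempty with rfl | hS
  · simp only [Finset.card_empty, Nat.cast_zero]
    positivity
  obtain ⟨m, hm, hmin⟩ := S.exists_min_image f hS
  have hcard : S.card ≤ (Finset.Icc 0 ⌊w / r⌋).card := by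
    refine Finset.card_le_card_of_injOn (fun x => ⌊(f x - f m) / r⌋) (fun x hx => ?_) ?_
    · have hfx : 0 ≤ f x - f m := sub_nonneg.2 (hmin x hx)
      exact Finset.mem_Icc.2 ⟨Int.floor_nonneg.2 (by positivity),
        Int.floor_le_floor (by gcongr; exact hwidth x hx m hm)⟩
    · intro x hx y hy hxy
      by_contra hne
      have hlt := Int.abs_sub_lt_one_of_floor_eq_floor hxy
      rw [← sub_div, sub_sub_sub_cancel_right, abs_div, abs_of_pos hr, div_lt_one hr] at hlt
      exact (hsep hx hy hne).not_gt hlt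
  have hIcc : ((Finset.Icc 0 ⌊w / r⌋).card : ℤ) = ⌊w / r⌋ + 1 - 0 :=
    Int.card_Icc_of_le _ _ (by positivity)
  calc (S.card : ℝ) ≤ ((Finset.Icc 0 ⌊w / r⌋).card : ℤ) := by exact_mod_cast hcard
    _ = ⌊w / r⌋ + 1 := by rw [hIcc]; push_cast; ring
    _ ≤ w / r + 1 := by gcongr; exact Int.floor_le _

section Orthant

variable {ι : Type*} [Fintype ι] {S : Finset (EuclideanSpace ℝ ι)} {p : EuclideanSpace ℝ ι}

open Classical in
/-- The points of `S` whose closed orthant with signs `s` contains no other point of `S`: the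
maximal elements of `S` for the product order in which the `i`-th coordinate is reversed
when `s i = -1`. -/
noncomputable def orthantMaxima (S : Finset (EuclideanSpace ℝ ι)) (s : ι → ℤˣ) :
    Finset (EuclideanSpace ℝ ι) :=
  S.filter fun p => ∀ q ∈ S, q ≠ p → ∃ i, (s i : ℤ) * q i < (s i : ℤ) * p i

theorem mem_orthantMaxima_iff {s : ι → ℤˣ} :
    p ∈ orthantMaxima S s ↔ p ∈ S ∧ ∀ q ∈ S, q ≠ p → ∃ i, (s i : ℤ) * q i < (s i : ℤ) * p i := by
  classical
  exact Finset.mem_filter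

theorem exists_mem_orthantMaxima_of_convexIndependent
    (hS : ConvexIndependent ℝ ((↑) : S → EuclideanSpace ℝ ι)) (hp : p ∈ S) :
    ∃ s, p ∈ orthantMaxima S s := by
  classical
  obtain ⟨f, hf⟩ := exists_strongDual_forall_lt_of_convexIndependent hS hp
  set c : ι → ℝ := fun i => f (EuclideanSpace.single i 1) with hc
  have f_eq_sum (x : EuclideanSpace ℝ ι) : f x = ∑ i, x i * c i := by
    conv_lhs => rw [← (EuclideanSpace.basisFun ι ℝ).sum_repr x]
    simp [hc]
  refine ⟨fun i => if 0 ≤ c i then 1 else -1, mem_orthantMaxima_iff.2 ⟨hp, fun q hq hqp => ?_⟩⟩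
  by_contra! hle
  refine (hf q hq hqp).not_ge ?_
  rw [f_eq_sum, f_eq_sum]
  refine Finset.sum_le_sum fun i _ => ?_
  have := hle i
  split_ifs at this with hi <;> push_cast at this <;> nlinarith

theorem card_le_sum_card_orthantMaxima [DecidableEq ι]
    (hS : ConvexIndependent ℝ ((↑) : S → EuclideanSpace ℝ ι)) :
    S.card ≤ ∑ s : ι → ℤˣ, (orthantMaxima S s).card := by
  classical
  refine (Finset.card_le_card fun p hp => ?_).trans Finset.card_biUnion_le
  simpa using exists_mem_orthantMaxima_of_convexIndependent hS hp

end Orthant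

section Plane

variable {S : Finset (EuclideanSpace ℝ (Fin 2))} {s : Fin 2 → ℤˣ} {r : ℝ}

theorem dist_le_abs_sub_add_abs_sub (x y : EuclideanSpace ℝ (Fin 2)) :
    dist x y ≤ |x 0 - y 0| + |x 1 - y 1| := by
  rw [EuclideanSpace.dist_eq, Fin.sum_univ_two]
  refine Real.sqrt_le_iff.2 ⟨by positivity, ?_⟩
  simp only [Real.dist_eq]
  nlinarith [mul_nonneg (abs_nonneg (x 0 - y 0)) (abs_nonneg (x 1 - y 1))]

theorem mul_nonpos_of_mem_orthantMaxima {x y : EuclideanSpace ℝ (Fin 2)}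
    (hx : x ∈ orthantMaxima S s) (hy : y ∈ orthantMaxima S s) :
    ((s 0 : ℤ) * (x 0 - y 0)) * ((s 1 : ℤ) * (x 1 - y 1)) ≤ 0 := by
  rw [mem_orthantMaxima_iff] at hx hy
  rcases eq_or_ne x y with rfl | hxy
  · simp
  obtain ⟨i, hi⟩ := hx.2 y hy.1 hxy.symm
  obtain ⟨j, hj⟩ := hy.2 x hx.1 hxy
  fin_cases i <;> fin_cases j <;> simp only [Fin.zero_eta, Fin.mk_one] at hi hj <;> nlinarith

theorem card_orthantMaxima_le (hr : 0 < r)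
    (hsep : (S : Set (EuclideanSpace ℝ (Fin 2))).Pairwise fun x y => r ≤ dist x y) :
    ((orthantMaxima S s).card : ℝ) ≤ 2 * diam (S : Set (EuclideanSpace ℝ (Fin 2))) / r + 1 := by
  set h : EuclideanSpace ℝ (Fin 2) → ℝ := fun x => (s 0 : ℤ) * x 0 - (s 1 : ℤ) * x 1 with hh
  have mem_of_mem {x} (hx : x ∈ orthantMaxima S s) : x ∈ S := (mem_orthantMaxima_iff.1 hx).1
  have abs_sign_mul (i : Fin 2) (t : ℝ) : |((s i : ℤ) : ℝ) * t| = |t| := by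
    rcases Int.units_eq_one_or (s i) with hi | hi <;> simp [hi]
  have sub_eq (x y : EuclideanSpace ℝ (Fin 2)) :
      h x - h y = (s 0 : ℤ) * (x 0 - y 0) - (s 1 : ℤ) * (x 1 - y 1) := by
    rw [hh]; ring
  refine card_le_div_add_one_of_pairwise_le_abs_sub (f := h) hr (by positivity) ?_ ?_
  · intro x hx y hy hxy
    calc r ≤ dist x y := hsep (mem_of_mem hx) (mem_of_mem hy) hxy
      _ ≤ |x 0 - y 0| + |x 1 - y 1| := dist_le_abs_sub_add_abs_sub x y
      _ = |h x - h y| := by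
        rw [sub_eq, abs_sub_of_mul_nonpos (mul_nonpos_of_mem_orthantMaxima hx hy),
          abs_sign_mul, abs_sign_mul]
  · intro x hx y hy
    have hdist : dist x y ≤ diam (S : Set (EuclideanSpace ℝ (Fin 2))) :=
      dist_le_diam_of_mem S.finite_toSet.isBounded (mem_of_mem hx) (mem_of_mem hy)
    have hcoord (i : Fin 2) : |x i - y i| ≤ dist x y := by
      simpa [dist_eq_norm] using PiLp.norm_apply_le (x - y) i
    calc h x - h y ≤ |h x - h y| := le_abs_self _
      _ ≤ |x 0 - y 0| + |x 1 - y 1| := by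
        rw [sub_eq]
        exact (abs_sub _ _).trans_eq (by rw [abs_sign_mul, abs_sign_mul])
      _ ≤ 2 * diam (S : Set (EuclideanSpace ℝ (Fin 2))) := by linarith [hcoord 0, hcoord 1]

theorem card_le_of_convexIndependent_of_pairwise_le_dist
    (hS : ConvexIndependent ℝ ((↑) : S → EuclideanSpace ℝ (Fin 2))) (hr : 0 < r)
    (hsep : (S : Set (EuclideanSpace ℝ (Fin 2))).Pairwise fun x y => r ≤ dist x y) :
    (S.card : ℝ) ≤ 4 * (2 * diam (S : Set (EuclideanSpace ℝ (Fin 2))) / r + 1) := by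
  calc (S.card : ℝ) ≤ ∑ s : Fin 2 → ℤˣ, ((orthantMaxima S s).card : ℝ) := by
        exact_mod_cast card_le_sum_card_orthantMaxima hS
    _ ≤ Fintype.card (Fin 2 → ℤˣ) • (2 * diam (S : Set (EuclideanSpace ℝ (Fin 2))) / r + 1) :=
        Finset.sum_le_card_nsmul _ _ _ fun s _ => card_orthantMaxima_le hr hsep
    _ = 4 * (2 * diam (S : Set (EuclideanSpace ℝ (Fin 2))) / r + 1) := by
        rw [Fintype.card_fun, Fintype.card_units_int, Fintype.card_fin, nsmul_eq_mul]
        norm_num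

theorem exists_card_le_mul_diam_add (Λ : AddSubgroup (EuclideanSpace ℝ (Fin 2)))
    [DiscreteTopology Λ] {ε : ℝ} (hε : 0 < ε) :
    ∃ C : ℝ, ∀ A : Finset (EuclideanSpace ℝ (Fin 2)), (∀ p ∈ A, p ∈ Λ) →
      ConvexIndependent ℝ ((↑) : A → EuclideanSpace ℝ (Fin 2)) →
      (A.card : ℝ) ≤ ε * diam (A : Set (EuclideanSpace ℝ (Fin 2))) + C := by
  classical
  obtain ⟨r, hr, hrε⟩ : ∃ r : ℝ, 0 < r ∧ 8 / r = ε := ⟨8 / ε, by positivity, by field_simp⟩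
  have hfin : (ball 0 r ∩ (Λ : Set (EuclideanSpace ℝ (Fin 2)))).Finite :=
    finite_isBounded_inter_isClosed DiscreteTopology.isDiscrete isBounded_ball
      AddSubgroup.isClosed_of_discrete
  set D := hfin.toFinset.erase 0
  refine ⟨D.card * 2 + 4, fun A hΛ hA => ?_⟩
  set S := A.filter fun p => ¬ ∃ d ∈ D, p + d ∈ A
  have hSA : S ⊆ A := Finset.filter_subset _ _
  have hclose : ((A.filter fun p => ∃ d ∈ D, p + d ∈ A).card : ℝ) ≤ D.card * 2 := by
    exact_mod_cast card_filter_exists_add_mem_le finrank_euclideanSpace_fin hA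
      (Finset.notMem_erase 0 _)
  have hsep : (S : Set (EuclideanSpace ℝ (Fin 2))).Pairwise fun x y => r ≤ dist x y := by
    intro x hx y hy hxy
    by_contra! hlt
    refine (Finset.mem_filter.1 hx).2 ⟨y - x, ?_, by simpa using hSA hy⟩
    simpa [D, sub_eq_zero, hxy.symm, ← dist_eq_norm, dist_comm y x, hlt] using
      Λ.sub_mem (hΛ y (hSA hy)) (hΛ x (hSA hx))
  have hfar : (S.card : ℝ) ≤ ε * diam (A : Set (EuclideanSpace ℝ (Fin 2))) + 4 :=
    calc (S.card : ℝ) ≤ 4 * (2 * diam (S : Set (EuclideanSpace ℝ (Fin 2))) / r + 1) :=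
          card_le_of_convexIndependent_of_pairwise_le_dist (hA.mono hSA) hr hsep
      _ = ε * diam (S : Set (EuclideanSpace ℝ (Fin 2))) + 4 := by rw [← hrε]; ring
      _ ≤ ε * diam (A : Set (EuclideanSpace ℝ (Fin 2))) + 4 := by
          gcongr
          exact diam_mono hSA A.finite_toSet.isBounded
  have hsplit : (A.card : ℝ) = (A.filter fun p => ∃ d ∈ D, p + d ∈ A).card + S.card := by
    exact_mod_cast (A.card_filter_add_card_filter_not _).symm
  linarith

end Plane

section Perimeter

variable {E : Type*} [NormedAddCommGroup E] [NormedSpace ℝ E] {J : Set E}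

theorem exists_add_smul_mem_frontier (hJ : Bornology.IsBounded J) {z v : E} (hz : z ∈ J)
    (hv : v ≠ 0) : ∃ t : ℝ, z + t • v ∈ frontier J := by
  set γ : ℝ → E := fun t => z + t • v
  have hγ : Continuous γ := by fun_prop
  have hne_univ : γ ⁻¹' J ≠ univ := by
    intro huniv
    obtain ⟨R, hR⟩ := hJ.exists_norm_le
    have hv' : 0 < ‖v‖ := norm_pos_iff.2 hv
    have hR0 : 0 ≤ R := (norm_nonneg z).trans (hR z hz)
    have ht : γ ((R + ‖z‖ + 1) / ‖v‖) ∈ J := eq_univ_iff_forall.1 huniv _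
    have hnorm : ‖((R + ‖z‖ + 1) / ‖v‖) • v‖ = R + ‖z‖ + 1 := by
      rw [norm_smul, Real.norm_of_nonneg (by positivity), div_mul_cancel₀ _ hv'.ne']
    have := norm_le_add_norm_add' z (((R + ‖z‖ + 1) / ‖v‖) • v)
    linarith [hR _ ht]
  obtain ⟨t, ht⟩ := nonempty_frontier_iff.2 ⟨⟨0, by simpa [γ] using hz⟩, hne_univ⟩
  exact ⟨t, hγ.frontier_preimage_subset J ht⟩

theorem image_subset_image_frontier {F : Type*} [AddCommGroup F] [Module ℝ F]
    (hJ : Bornology.IsBounded J) {f : E →ₗ[ℝ] F} (hf : LinearMap.ker f ≠ ⊥) :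
    f '' J ⊆ f '' frontier J := by
  obtain ⟨v, hfv, hv⟩ := Submodule.exists_mem_ne_zero_of_ne_bot hf
  rintro _ ⟨z, hz, rfl⟩
  obtain ⟨t, ht⟩ := exists_add_smul_mem_frontier hJ hz hv
  exact ⟨_, ht, by rw [map_add, map_smul, LinearMap.mem_ker.1 hfv, smul_zero, add_zero]⟩

theorem ediam_le_hausdorffMeasure_frontier [MeasurableSpace E] [BorelSpace E]
    (hE : 1 < Module.rank ℝ E) (hJ : Bornology.IsBounded J) (hconn : IsPreconnected J) :
    ediam J ≤ μH[1] (frontier J) := by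
  refine ediam_le fun x hx y hy => ?_
  obtain ⟨f, hf1, hf⟩ := exists_dual_vector'' ℝ (y - x)
  have hlip : LipschitzWith 1 f := f.lipschitz.weaken hf1
  have hIcc : Icc (f x) (f y) ⊆ f '' frontier J :=
    ((hconn.image f f.continuous.continuousOn).Icc_subset (mem_image_of_mem f hx)
      (mem_image_of_mem f hy)).trans
      (image_subset_image_frontier hJ (ker_ne_bot_of_one_lt_rank hE f.toLinearMap))
  calc edist x y = volume (Icc (f x) (f y)) := by
        rw [Real.volume_Icc, ← map_sub, hf, edist_comm, edist_dist, dist_eq_norm]; rfl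
    _ = μH[1] (Icc (f x) (f y)) := by rw [hausdorffMeasure_real]
    _ ≤ μH[1] (f '' frontier J) := measure_mono hIcc
    _ ≤ μH[1] (frontier J) := by simpa using hlip.hausdorffMeasure_image_le zero_le_one _

end Perimeter

/-- The junk value `per J = 0` also arises when the boundary has infinite length. -/
theorem diam_le_per {J : Set (EuclideanSpace ℝ (Fin 2))} (hJ : Bornology.IsBounded J)
    (hconn : IsPreconnected J) (hper : per J ≠ 0) : diam J ≤ per J := by
  refine ENNReal.toReal_mono (ENNReal.toReal_ne_zero.1 hper).2
    (ediam_le_hausdorffMeasure_frontier ?_ hJ hconn)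
  rw [← Module.finrank_eq_rank, finrank_euclideanSpace_fin]
  norm_num

/-- The integer lattice `ℤ²` of the plane, bundled as a subgroup; as the `ℤ`-span of the standard
basis it inherits its discreteness from Mathlib. -/
noncomputable def latticePts : AddSubgroup (EuclideanSpace ℝ (Fin 2)) :=
  (Submodule.span ℤ (range (EuclideanSpace.basisFun (Fin 2) ℝ).toBasis)).toAddSubgroup

instance : DiscreteTopology latticePts :=
  inferInstanceAs (DiscreteTopology
    (Submodule.span ℤ (range (EuclideanSpace.basisFun (Fin 2) ℝ).toBasis)).toAddSubgroup)

theorem mem_latticePts {x : EuclideanSpace ℝ (Fin 2)} : x ∈ latticePts ↔ IsLatticePt x := by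
  rw [latticePts, Submodule.mem_toAddSubgroup, Module.Basis.mem_span_iff_repr_mem]
  simp [IsLatticePt, eq_comm]

theorem exists_ncard_extremePoints_le_mul_diam_add {ε : ℝ} (hε : 0 < ε) :
    ∃ C : ℝ, ∀ V : Set (EuclideanSpace ℝ (Fin 2)), V.Finite → (∀ v ∈ V, IsLatticePt v) →
      (((convexHull ℝ V).extremePoints ℝ).ncard : ℝ) ≤ ε * diam (convexHull ℝ V) + C := by
  obtain ⟨C, hC⟩ := exists_card_le_mul_diam_add latticePts hε
  refine ⟨C, fun V hV hlat => ?_⟩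
  have hsub : (convexHull ℝ V).extremePoints ℝ ⊆ V := extremePoints_convexHull_subset
  have hfin : ((convexHull ℝ V).extremePoints ℝ).Finite := hV.subset hsub
  have hind : ConvexIndependent ℝ ((↑) : hfin.toFinset → EuclideanSpace ℝ (Fin 2)) :=
    (convex_convexHull ℝ V).convexIndependent_extremePoints.mono hfin.coe_toFinset.subset
  calc (((convexHull ℝ V).extremePoints ℝ).ncard : ℝ) = hfin.toFinset.card := by
        rw [ncard_eq_toFinset_card _ hfin]
    _ ≤ ε * diam (hfin.toFinset : Set (EuclideanSpace ℝ (Fin 2))) + C :=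
        hC _ (fun p hp => mem_latticePts.2 (hlat p (hsub (hfin.mem_toFinset.1 hp)))) hind
    _ ≤ ε * diam (convexHull ℝ V) + C := by
        gcongr
        rw [hfin.coe_toFinset]
        exact diam_mono extremePoints_subset (isBounded_convexHull.2 hV.isBounded)

theorem stmt12_general {ι : Type*} {l : Filter ι} (V : ι → Set (EuclideanSpace ℝ (Fin 2)))
    (hVfin : ∀ n, (V n).Finite) (hVlat : ∀ n, ∀ v ∈ V n, IsLatticePt v)
    (J : ι → Set (EuclideanSpace ℝ (Fin 2))) (hJ : ∀ n, J n = convexHull ℝ (V n))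
    (hp : Tendsto (fun n => per (J n)) l atTop) :
    Tendsto (fun n => (((J n).extremePoints ℝ).ncard : ℝ) / per (J n)) l (𝓝 0) := by
  rw [Metric.tendsto_nhds]
  intro ε hε
  obtain ⟨C, hC⟩ := exists_ncard_extremePoints_le_mul_diam_add (half_pos hε)
  filter_upwards [hp.eventually_gt_atTop 0, hp.eventually_gt_atTop (C / (ε / 2))] with n hpos hlarge
  have hbdd : Bornology.IsBounded (J n) := hJ n ▸ isBounded_convexHull.2 (hVfin n).isBounded
  have hconn : IsPreconnected (J n) := hJ n ▸ (convex_convexHull ℝ _).isPreconnected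
  have hlt : (((J n).extremePoints ℝ).ncard : ℝ) < ε * per (J n) :=
    calc (((J n).extremePoints ℝ).ncard : ℝ) ≤ ε / 2 * diam (J n) + C :=
          hJ n ▸ hC (V n) (hVfin n) (hVlat n)
      _ ≤ ε / 2 * per (J n) + C := by gcongr; exact diam_le_per hbdd hconn hpos.ne'
      _ < ε / 2 * per (J n) + per (J n) * (ε / 2) := by
          gcongr
          exact (div_lt_iff₀ (by positivity)).1 hlarge
      _ = ε * per (J n) := by ring
  rwa [dist_zero_right, Real.norm_of_nonneg (by positivity), div_lt_iff₀ hpos]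

theorem stmt12 (V : ℕ → Set (EuclideanSpace ℝ (Fin 2)))
    (hVfin : ∀ n, (V n).Finite) (hVlat : ∀ n, ∀ v ∈ V n, IsLatticePt v)
    (J : ℕ → Set (EuclideanSpace ℝ (Fin 2))) (hJ : ∀ n, J n = convexHull ℝ (V n))
    (hp : Tendsto (fun n => per (J n)) atTop atTop)
    (O : Set (EuclideanSpace ℝ (Fin 2)))
    (hOc : IsCompact O) (hOconv : Convex ℝ O) (hOint : (interior O).Nonempty)
    (hconv : Tendsto (fun n => hausdorffDist ((per (J n))⁻¹ • J n) O) atTop (𝓝 0)) :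
    -- the number of faces (= vertices) of the polygon `J n` is negligible w.r.t. its perimeter
    Tendsto (fun n => ((Set.extremePoints ℝ (J n)).ncard : ℝ) / per (J n)) atTop (𝓝 0) := by
  exact stmt12_general V hVfin hVlat J hJ hp
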